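/- The binary classification objective c ↦ E_{x∼p}[log c(x)] + E_{x∼q}[log(1 − c(x))] over measurable functions c : X → (0,1) is maximized pointwise by c*(x) = p(x)/(p(x)+q(x)) at every x with p(x)+q(x) > 0. -/

import Mathlib

open scoped BigOperators

/-!
Up to sign, the objective at a point is the cross entropy of the weights `p x`, `q x` relative to
the distribution `(t, 1 - t)`, so the claim is Gibbs' inequality for two outcomes. That inequality
is the weighted sum over the outcomes of the tangent line bound `log u ≤ u - 1` at
`u = t i / (w i / W)`, where `W` is the total weight: the linear terms add up to
`W * ∑ t i - W ≤ 0`.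
-/

theorem mul_log_le_mul_log_div_add {a s t : ℝ} (ha : 0 ≤ a) (hs : 0 < s) (ht : 0 < t) :
    a * Real.log t ≤ a * Real.log (a / s) + (s * t - a) := by
  rcases ha.eq_or_lt with rfl | ha_pos
  · simpa using (mul_pos hs ht).le
  · have has : 0 < a / s := div_pos ha_pos hs
    have tangent : Real.log t - Real.log (a / s) ≤ t / (a / s) - 1 := by
      rw [← Real.log_div ht.ne' has.ne']
      exact Real.log_le_sub_one_of_pos (div_pos ht has)
    calc a * Real.log t
        = a * Real.log (a / s) + a * (Real.log t - Real.log (a / s)) := by ring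
      _ ≤ a * Real.log (a / s) + a * (t / (a / s) - 1) := by gcongr
      _ = a * Real.log (a / s) + (s * t - a) := by field_simp

theorem sum_mul_log_le_sum_mul_log_div_sum {ι : Type*} {s : Finset ι} {w t : ι → ℝ}
    (hw : ∀ i ∈ s, 0 ≤ w i) (hw_sum : 0 < ∑ i ∈ s, w i)
    (ht : ∀ i ∈ s, 0 < t i) (ht_sum : ∑ i ∈ s, t i ≤ 1) :
    ∑ i ∈ s, w i * Real.log (t i) ≤ ∑ i ∈ s, w i * Real.log (w i / ∑ j ∈ s, w j) := by
  set W := ∑ i ∈ s, w i with hW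
  calc ∑ i ∈ s, w i * Real.log (t i)
      ≤ ∑ i ∈ s, (w i * Real.log (w i / W) + (W * t i - w i)) :=
        Finset.sum_le_sum fun i hi ↦ mul_log_le_mul_log_div_add (hw i hi) hw_sum (ht i hi)
    _ = ∑ i ∈ s, w i * Real.log (w i / W) + (W * ∑ i ∈ s, t i - W) := by
        rw [Finset.sum_add_distrib, Finset.sum_sub_distrib, ← Finset.mul_sum, ← hW]
    _ ≤ ∑ i ∈ s, w i * Real.log (w i / W) := by
        linarith [mul_le_of_le_one_right hw_sum.le ht_sum]

theorem optimal_discriminator_general {a b t : ℝ} (ha : 0 ≤ a) (hb : 0 ≤ b) (hab : 0 < a + b)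
    (ht_pos : 0 < t) (ht_lt_one : t < 1) :
    a * Real.log t + b * Real.log (1 - t) ≤
      a * Real.log (a / (a + b)) + b * Real.log (1 - a / (a + b)) := by
  have one_sub_optimum : 1 - a / (a + b) = b / (a + b) := by
    rw [one_sub_div hab.ne', add_sub_cancel_left]
  have gibbs := sum_mul_log_le_sum_mul_log_div_sum (s := Finset.univ)
    (w := ![a, b]) (t := ![t, 1 - t])
    (by simp [Fin.forall_fin_two, ha, hb]) (by simpa using hab)
    (by simp [Fin.forall_fin_two, ht_pos, ht_lt_one]) (by simp)
  simpa [Fin.sum_univ_two, one_sub_optimum] using gibbs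

/-- The binary classification objective is maximized pointwise by the optimal
discriminator `c*(x) = p(x)/(p(x)+q(x))` at every `x` with `p(x)+q(x) > 0`. -/
theorem optimal_discriminator {X : Type*} [Fintype X]
    (p q : X → ℝ)
    (hp0 : ∀ x, 0 ≤ p x) (hpsum : ∑ x : X, p x = 1)
    (hq0 : ∀ x, 0 ≤ q x) (hqsum : ∑ x : X, q x = 1) :
    ∀ x : X, 0 < p x + q x →
      ∀ t : ℝ, 0 < t → t < 1 →
        p x * Real.log t + q x * Real.log (1 - t) ≤
          p x * Real.log (p x / (p x + q x)) +
            q x * Real.log (1 - p x / (p x + q x)) := by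
  intro x hpq t ht_pos ht_lt_one
  exact optimal_discriminator_general (hp0 x) (hq0 x) hpq ht_pos ht_lt_one
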